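/- Let n, p, r̄, s̄ be positive integers and μ̄ > 0. Suppose c̃ > 0 is a constant with the separation property: for all matrices P' = UΣVᵀ and Q' = LΛRᵀ with U, V, L, R ∈ O_{p,r̄} all μ̄-incoherent and Σ, Λ diagonal with nonnegative entries, one has ‖P'−Q'‖_max² ≤ (c̃ μ̄ r̄⁴ / p)·‖P'−Q'‖_F². Assume s̄ ≤ p/(8 c̃ μ̄ r̄⁴). Let X ∈ ℝ^{n×p} be a design matrix with: (a) ‖XΔ‖_F ≥ σ_min·‖Δ‖_F for every Δ ∈ ℝ^{p×p}, where σ_min > 0; (b) spectral norm ‖X‖ ≤ σ_max; (c) every column of X has Euclidean norm at most B. Let Y = X(L* + S*) + W in ℝ^{n×p}, where L* = U*Σ*V*ᵀ with U*, V* ∈ O_{p,r̄} μ̄-incoherent and Σ* diagonal with nonnegative entries and ‖S*‖₀ ≤ s̄. Suppose (L̂, Ŝ) is feasible, i.e. L̂ = ÛΣ̂V̂ᵀ with Û, V̂ ∈ O_{p,r̄} μ̄-incoherent and Σ̂ diagonal with nonnegative entries, ‖Ŝ‖₀ ≤ s̄, and ‖Y − X(L̂ + Ŝ)‖_F ≤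 ‖Y − X(L* + S*)‖_F. Then ‖L̂ − L*‖_F² + ‖Ŝ − S*‖_F² ≤ (128/σ_min⁴)·( r̄·σ_max²·‖W‖² + s̄·B²·w² ), where ‖W‖ is the spectral norm of W and w is the maximum Euclidean norm of the columns of W. -/

import Mathlib

open Matrix
open scoped BigOperators RealInnerProductSpace

noncomputable def frobNorm {m n : Type*} [Fintype m] [Fintype n] (M : Matrix m n ℝ) : ℝ :=
  Real.sqrt (∑ i, ∑ j, (M i j) ^ 2)

noncomputable def frobInner {m n : Type*} [Fintype m] [Fintype n] (A B : Matrix m n ℝ) : ℝ :=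
  ∑ i, ∑ j, A i j * B i j

noncomputable def maxNorm {m n : Type*} [Fintype m] [Fintype n] (M : Matrix m n ℝ) : ℝ :=
  ⨆ i, ⨆ j, |M i j|

noncomputable def l0Norm {m n : Type*} (M : Matrix m n ℝ) : ℕ :=
  Set.ncard {ij : m × n | M ij.1 ij.2 ≠ 0}

noncomputable def specNorm {p q : ℕ} (M : Matrix (Fin p) (Fin q) ℝ) : ℝ :=
  ‖LinearMap.toContinuousLinearMap (Matrix.toEuclideanLin M)‖

def Incoherent {p r : ℕ} (μ : ℝ) (U : Matrix (Fin p) (Fin r) ℝ) : Prop :=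
  ∀ i, Real.sqrt (∑ j, (U i j) ^ 2) ≤ Real.sqrt (μ * r / p)

def SepProp (p r : ℕ) (μ c : ℝ) : Prop :=
  ∀ (U V L R : Matrix (Fin p) (Fin r) ℝ) (S Lam : Matrix (Fin r) (Fin r) ℝ),
    Uᵀ * U = 1 → Vᵀ * V = 1 → Lᵀ * L = 1 → Rᵀ * R = 1 →
    Incoherent μ U → Incoherent μ V → Incoherent μ L → Incoherent μ R →
    S.IsDiag → (∀ i, 0 ≤ S i i) → Lam.IsDiag → (∀ i, 0 ≤ Lam i i) →
    maxNorm (U * S * Vᵀ - L * Lam * Rᵀ) ^ 2 ≤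
      (c * μ * (r : ℝ) ^ 4 / p) * frobNorm (U * S * Vᵀ - L * Lam * Rᵀ) ^ 2

noncomputable def l1Norm {m n : Type*} [Fintype m] [Fintype n] (M : Matrix m n ℝ) : ℝ :=
  ∑ i, ∑ j, |M i j|

noncomputable def nuclearNorm {p q : ℕ} (M : Matrix (Fin p) (Fin q) ℝ) : ℝ :=
  sSup {x : ℝ | ∃ X : Matrix (Fin p) (Fin q) ℝ, specNorm X ≤ 1 ∧ x = frobInner M X}

noncomputable def Phi {p : ℕ} (lam : ℝ) (Δ : Matrix (Fin p) (Fin p) ℝ) : ℝ :=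
  sInf {x : ℝ | ∃ L S : Matrix (Fin p) (Fin p) ℝ, L + S = Δ ∧ x = nuclearNorm L + lam * l1Norm S}

theorem frobNorm_sq {m n : Type*} [Fintype m] [Fintype n] (M : Matrix m n ℝ) :
    frobNorm M ^ 2 = ∑ i, ∑ j, M i j ^ 2 :=
  Real.sq_sqrt (by positivity)

theorem frobNorm_nonneg {m n : Type*} [Fintype m] [Fintype n] (M : Matrix m n ℝ) :
    0 ≤ frobNorm M :=
  Real.sqrt_nonneg _

theorem frobNorm_transpose {m n : Type*} [Fintype m] [Fintype n] (M : Matrix m n ℝ) :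
    frobNorm Mᵀ = frobNorm M := by
  simp only [frobNorm, Matrix.transpose_apply]
  rw [Finset.sum_comm]

theorem frobInner_self {m n : Type*} [Fintype m] [Fintype n] (M : Matrix m n ℝ) :
    frobInner M M = frobNorm M ^ 2 := by
  rw [frobNorm_sq]
  simp only [frobInner, sq]

theorem frobInner_comm {m n : Type*} [Fintype m] [Fintype n] (M N : Matrix m n ℝ) :
    frobInner M N = frobInner N M := by
  simp only [frobInner, mul_comm]

theorem frobInner_add_right {m n : Type*} [Fintype m] [Fintype n] (A M N : Matrix m n ℝ) :
    frobInner A (M + N) = frobInner A M + frobInner A N := by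
  simp only [frobInner, Matrix.add_apply, mul_add, Finset.sum_add_distrib]

theorem frobNorm_add_sq {m n : Type*} [Fintype m] [Fintype n] (M N : Matrix m n ℝ) :
    frobNorm (M + N) ^ 2 = frobNorm M ^ 2 + 2 * frobInner M N + frobNorm N ^ 2 := by
  rw [← frobInner_self, frobInner_add_right, frobInner_comm _ M, frobInner_comm _ N,
    frobInner_add_right, frobInner_add_right, frobInner_self, frobInner_self, frobInner_comm N M]
  ring

theorem frobNorm_sub_sq {m n : Type*} [Fintype m] [Fintype n] (M N : Matrix m n ℝ) :
    frobNorm (M - N) ^ 2 = frobNorm M ^ 2 - 2 * frobInner M N + frobNorm N ^ 2 := by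
  have h := frobNorm_add_sq (M - N) N
  have h' := frobInner_add_right N (M - N) N
  rw [sub_add_cancel] at h h'
  rw [frobInner_self, frobInner_comm N M, frobInner_comm N] at h'
  linarith

theorem frobInner_eq_trace {m n : Type*} [Fintype m] [Fintype n] (A B : Matrix m n ℝ) :
    frobInner A B = (Aᵀ * B).trace := by
  simp only [frobInner, Matrix.trace, Matrix.diag, Matrix.mul_apply, Matrix.transpose_apply]
  rw [Finset.sum_comm]

theorem frobInner_mul_left {l m n : Type*} [Fintype l] [Fintype m] [Fintype n]
    (A : Matrix l n ℝ) (X : Matrix l m ℝ) (B : Matrix m n ℝ) :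
    frobInner A (X * B) = frobInner (Xᵀ * A) B := by
  rw [frobInner_eq_trace, frobInner_eq_trace, Matrix.transpose_mul, Matrix.transpose_transpose,
    Matrix.mul_assoc]

theorem frobInner_mul_right {l m n : Type*} [Fintype l] [Fintype m] [Fintype n]
    (A : Matrix l n ℝ) (B : Matrix l m ℝ) (X : Matrix m n ℝ) :
    frobInner A (B * X) = frobInner (A * Xᵀ) B := by
  rw [frobInner_eq_trace, frobInner_eq_trace, Matrix.transpose_mul, Matrix.transpose_transpose,
    ← Matrix.mul_assoc, Matrix.trace_mul_comm, ← Matrix.mul_assoc]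

theorem frobInner_le {m n : Type*} [Fintype m] [Fintype n] (A B : Matrix m n ℝ) :
    frobInner A B ≤ frobNorm A * frobNorm B := by
  refine (abs_le_of_sq_le_sq' ?_
    (mul_nonneg (frobNorm_nonneg _) (frobNorm_nonneg _))).2
  rw [mul_pow, frobNorm_sq, frobNorm_sq]
  simp only [frobInner, ← Fintype.sum_prod_type']
  exact Finset.sum_mul_sq_le_sq_mul_sq _ _ _

/-- Pythagoras for the projection onto the column space of `U`. -/
theorem frobNorm_sq_eq_of_orthonormal {m n r : Type*} [Fintype m] [Fintype n] [Fintype r]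
    [DecidableEq r] {U : Matrix m r ℝ} (hU : Uᵀ * U = 1) (D : Matrix m n ℝ) :
    frobNorm D ^ 2 = frobNorm (Uᵀ * D) ^ 2 + frobNorm (D - U * (Uᵀ * D)) ^ 2 := by
  have h1 : frobInner D (U * (Uᵀ * D)) = frobNorm (Uᵀ * D) ^ 2 := by
    rw [frobInner_mul_left, frobInner_self]
  have h2 : frobNorm (U * (Uᵀ * D)) ^ 2 = frobNorm (Uᵀ * D) ^ 2 := by
    rw [← frobInner_self (U * _), frobInner_mul_left, ← Matrix.mul_assoc, hU, Matrix.one_mul,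
      frobInner_self]
  rw [frobNorm_sub_sq, h1, h2]
  ring

theorem frobNorm_transpose_mul_le {m n r : Type*} [Fintype m] [Fintype n] [Fintype r]
    [DecidableEq r] {U : Matrix m r ℝ} (hU : Uᵀ * U = 1) (D : Matrix m n ℝ) :
    frobNorm (Uᵀ * D) ≤ frobNorm D := by
  refine le_of_sq_le_sq ?_ (frobNorm_nonneg _)
  nlinarith [frobNorm_sq_eq_of_orthonormal hU D, sq_nonneg (frobNorm (D - U * (Uᵀ * D)))]

theorem frobNorm_sub_proj_le {m n r : Type*} [Fintype m] [Fintype n] [Fintype r]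
    [DecidableEq r] {U : Matrix m r ℝ} (hU : Uᵀ * U = 1) (D : Matrix m n ℝ) :
    frobNorm (D - U * (Uᵀ * D)) ≤ frobNorm D := by
  refine le_of_sq_le_sq ?_ (frobNorm_nonneg _)
  nlinarith [frobNorm_sq_eq_of_orthonormal hU D, sq_nonneg (frobNorm (Uᵀ * D))]

theorem frobNorm_mul_le {m n r : Type*} [Fintype m] [Fintype n] [Fintype r]
    [DecidableEq r] {V : Matrix n r ℝ} (hV : Vᵀ * V = 1) (D : Matrix m n ℝ) :
    frobNorm (D * V) ≤ frobNorm D := by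
  rw [← frobNorm_transpose, ← frobNorm_transpose D, Matrix.transpose_mul]
  exact frobNorm_transpose_mul_le hV _

section SpectralNorm

open scoped Matrix.Norms.L2Operator

theorem specNorm_eq_l2OpNorm {p q : ℕ} (M : Matrix (Fin p) (Fin q) ℝ) : specNorm M = ‖M‖ :=
  rfl

theorem specNorm_nonneg {p q : ℕ} (M : Matrix (Fin p) (Fin q) ℝ) : 0 ≤ specNorm M :=
  norm_nonneg _

theorem specNorm_transpose {p q : ℕ} (M : Matrix (Fin p) (Fin q) ℝ) :
    specNorm Mᵀ = specNorm M := by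
  rw [specNorm_eq_l2OpNorm, specNorm_eq_l2OpNorm, ← Matrix.l2_opNorm_conjTranspose M,
    Matrix.conjTranspose_eq_transpose_of_trivial]

theorem specNorm_mul_le {p q l : ℕ} (M : Matrix (Fin p) (Fin q) ℝ)
    (N : Matrix (Fin q) (Fin l) ℝ) : specNorm (M * N) ≤ specNorm M * specNorm N :=
  Matrix.l2_opNorm_mul M N

theorem sum_sq_mulVec_le {p q : ℕ} (M : Matrix (Fin p) (Fin q) ℝ) (x : Fin q → ℝ) :
    ∑ i, (M *ᵥ x) i ^ 2 ≤ specNorm M ^ 2 * ∑ i, x i ^ 2 := by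
  have h := Matrix.l2_opNorm_mulVec M (WithLp.toLp 2 x)
  have h' := pow_le_pow_left₀ (norm_nonneg _) h 2
  rw [mul_pow, EuclideanSpace.real_norm_sq_eq, EuclideanSpace.real_norm_sq_eq] at h'
  exact h'

end SpectralNorm

theorem frobNorm_mul_le_sqrt_mul_specNorm {p q r : ℕ} (G : Matrix (Fin p) (Fin q) ℝ)
    {V : Matrix (Fin q) (Fin r) ℝ} (hV : Vᵀ * V = 1) :
    frobNorm (G * V) ≤ √r * specNorm G := by
  refine le_of_sq_le_sq ?_ (mul_nonneg (Real.sqrt_nonneg _) (specNorm_nonneg _))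
  rw [mul_pow, Real.sq_sqrt (Nat.cast_nonneg _), frobNorm_sq, Finset.sum_comm]
  have hcol : ∀ j, ∑ i, (G * V) i j ^ 2 ≤ specNorm G ^ 2 := by
    intro j
    have h1 : ∑ i, V i j ^ 2 = 1 := by
      have := congrFun (congrFun hV j) j
      simpa [Matrix.mul_apply, sq] using this
    have h := sum_sq_mulVec_le G (fun i => V i j)
    rw [h1, mul_one] at h
    exact h
  calc ∑ j, ∑ i, (G * V) i j ^ 2 ≤ ∑ _j : Fin r, specNorm G ^ 2 :=
        Finset.sum_le_sum fun j _ => hcol j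
    _ = r * specNorm G ^ 2 := by simp

/-- Trace duality for a difference of two matrices of rank at most `r`. -/
theorem frobInner_sub_le_of_factored {p q r : ℕ} (G : Matrix (Fin p) (Fin q) ℝ)
    {U : Matrix (Fin p) (Fin r) ℝ} {V : Matrix (Fin q) (Fin r) ℝ}
    (A : Matrix (Fin p) (Fin r) ℝ) (C : Matrix (Fin r) (Fin q) ℝ)
    (hU : Uᵀ * U = 1) (hV : Vᵀ * V = 1) :
    frobInner G (A * Vᵀ - U * C) ≤ 2 * √r * specNorm G * frobNorm (A * Vᵀ - U * C) := by
  set D := A * Vᵀ - U * C with hD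
  have hUU : D - U * (Uᵀ * D) = ((D - U * (Uᵀ * D)) * V) * Vᵀ := by
    have e : D - U * (Uᵀ * D) = (A - U * (Uᵀ * A)) * Vᵀ := by
      have e1 : U * (Uᵀ * (U * C)) = U * C := by
        rw [← Matrix.mul_assoc Uᵀ, hU, Matrix.one_mul]
      rw [hD, Matrix.mul_sub, Matrix.mul_sub, e1, Matrix.sub_mul]
      simp only [Matrix.mul_assoc]
      abel
    rw [e, Matrix.mul_assoc _ Vᵀ V, hV, Matrix.mul_one]
  have hsplit : frobInner G D =
      frobInner (Uᵀ * G) (Uᵀ * D) + frobInner (G * V) ((D - U * (Uᵀ * D)) * V) := by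
    have h2 := frobInner_mul_right G ((D - U * (Uᵀ * D)) * V) Vᵀ
    rw [← hUU, Matrix.transpose_transpose] at h2
    rw [← h2, ← frobInner_mul_left, ← frobInner_add_right]
    congr 1
    abel
  have hG : frobNorm (Uᵀ * G) ≤ √r * specNorm G := by
    rw [← frobNorm_transpose, Matrix.transpose_mul, Matrix.transpose_transpose,
      ← specNorm_transpose]
    exact frobNorm_mul_le_sqrt_mul_specNorm _ hU
  have hnn : 0 ≤ √(r : ℝ) * specNorm G := mul_nonneg (Real.sqrt_nonneg _) (specNorm_nonneg _)
  have h1 : frobInner (Uᵀ * G) (Uᵀ * D) ≤ √r * specNorm G * frobNorm D :=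
    (frobInner_le _ _).trans
      (mul_le_mul hG (frobNorm_transpose_mul_le hU D) (frobNorm_nonneg _) hnn)
  have h2 : frobInner (G * V) ((D - U * (Uᵀ * D)) * V) ≤ √r * specNorm G * frobNorm D :=
    (frobInner_le _ _).trans
      (mul_le_mul (frobNorm_mul_le_sqrt_mul_specNorm G hV)
        ((frobNorm_mul_le hV _).trans (frobNorm_sub_proj_le hU D)) (frobNorm_nonneg _) hnn)
  rw [hsplit]
  linarith

theorem l0Norm_sub_le {m n : Type*} [Finite m] [Finite n] (A B : Matrix m n ℝ) :
    l0Norm (A - B) ≤ l0Norm A + l0Norm B := by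
  refine le_trans (Set.ncard_le_ncard ?_ (Set.toFinite _)) (Set.ncard_union_le _ _)
  intro ij h
  by_contra hn
  simp only [Set.mem_union, Set.mem_ofPred_eq, not_or, not_not] at hn
  exact h (by simp [hn.1, hn.2])

theorem frobInner_sq_le_of_entry_le {m n : Type*} [Fintype m] [Fintype n]
    (A E : Matrix m n ℝ) (t : ℝ) (hA : ∀ i j, |A i j| ≤ t) :
    frobInner A E ^ 2 ≤ l0Norm E * t ^ 2 * frobNorm E ^ 2 := by
  classical
  set s : Finset (m × n) := Finset.univ.filter fun ij => E ij.1 ij.2 ≠ 0 with hs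
  have hcard : l0Norm E = s.card := by
    rw [l0Norm, ← Set.ncard_coe_finset]
    simp [hs]
  have h1 : frobInner A E = ∑ ij ∈ s, A ij.1 ij.2 * E ij.1 ij.2 := by
    rw [frobInner, ← Fintype.sum_prod_type', hs, Finset.sum_filter_of_ne]
    intro x _ hx
    exact right_ne_zero_of_mul hx
  have h2 : ∑ ij ∈ s, A ij.1 ij.2 ^ 2 ≤ s.card * t ^ 2 := by
    rw [← nsmul_eq_mul]
    exact Finset.sum_le_card_nsmul _ _ _ fun ij _ => sq_le_sq' (abs_le.mp (hA _ _)).1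
      (abs_le.mp (hA _ _)).2
  have h3 : ∑ ij ∈ s, E ij.1 ij.2 ^ 2 ≤ frobNorm E ^ 2 := by
    rw [frobNorm_sq, ← Fintype.sum_prod_type' (f := fun i j => E i j ^ 2)]
    exact Finset.sum_le_univ_sum_of_nonneg fun _ => sq_nonneg _
  rw [h1, hcard]
  exact (Finset.sum_mul_sq_le_sq_mul_sq _ _ _).trans
    (mul_le_mul h2 h3 (Finset.sum_nonneg fun _ _ => sq_nonneg _) (by positivity))

theorem abs_entry_le_maxNorm {m n : Type*} [Fintype m] [Fintype n] (M : Matrix m n ℝ)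
    (i : m) (j : n) : |M i j| ≤ maxNorm M :=
  (le_ciSup (f := fun j => |M i j|) (Set.finite_range _).bddAbove j).trans
    (le_ciSup (f := fun i => ⨆ j, |M i j|) (Set.finite_range _).bddAbove i)

theorem abs_transpose_mul_entry_le {l m n : Type*} [Fintype l]
    (X : Matrix l m ℝ) (W : Matrix l n ℝ) (i : m) (j : n) :
    |(Xᵀ * W) i j| ≤ √(∑ k, X k i ^ 2) * √(∑ k, W k j ^ 2) := by
  rw [← Real.sqrt_mul (by positivity)]
  refine Real.abs_le_sqrt ?_
  simp only [Matrix.mul_apply, Matrix.transpose_apply]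
  exact Finset.sum_mul_sq_le_sq_mul_sq _ _ _

theorem add_sq_le_of_sq_le {a b x y d e : ℝ} (hx : 0 ≤ x) (hy : 0 ≤ y)
    (ha : a ^ 2 ≤ x * d ^ 2) (hb : b ^ 2 ≤ y * e ^ 2) :
    (a + b) ^ 2 ≤ (x + y) * (d ^ 2 + e ^ 2) := by
  have hab : a * b ≤ (√x * e) * (√y * d) ⊔ -((√x * e) * (√y * d)) := by
    refine (le_abs_self _).trans (sq_le_sq.mp ?_)
    calc (a * b) ^ 2 = a ^ 2 * b ^ 2 := by ring
      _ ≤ (x * d ^ 2) * (y * e ^ 2) := mul_le_mul ha hb (sq_nonneg _) (by positivity)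
      _ = _ := by rw [mul_pow, mul_pow, mul_pow, Real.sq_sqrt hx, Real.sq_sqrt hy]; ring
  have hx' := Real.sq_sqrt hx
  have hy' := Real.sq_sqrt hy
  have h1 := sq_nonneg (√x * e - √y * d)
  have h2 := sq_nonneg (√x * e + √y * d)
  have e1 : (√x * e) ^ 2 = x * e ^ 2 := by rw [mul_pow, hx']
  have e2 : (√y * d) ^ 2 = y * d ^ 2 := by rw [mul_pow, hy']
  rcases le_sup_iff.mp hab with h | h <;> nlinarith

/-- deterministic error bound for multitask regression with a
low-rank-plus-sparse coefficient matrix. -/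
theorem stmt2
    (n p rbar sbar : ℕ) (hn : 0 < n) (hp : 0 < p) (hrbar : 0 < rbar) (hsbar : 0 < sbar)
    (μbar c : ℝ) (hμbar : 0 < μbar) (hc : 0 < c) (hsep : SepProp p rbar μbar c)
    (hsparse : (sbar : ℝ) ≤ (p : ℝ) / (8 * c * μbar * (rbar : ℝ) ^ 4))
    (X : Matrix (Fin n) (Fin p) ℝ)
    (σmin σmax B : ℝ) (hσmin : 0 < σmin)
    (hXlow : ∀ Δ : Matrix (Fin p) (Fin p) ℝ, σmin * frobNorm Δ ≤ frobNorm (X * Δ))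
    (hXspec : specNorm X ≤ σmax)
    (hXcol : ∀ j, Real.sqrt (∑ i, (X i j) ^ 2) ≤ B)
    (Y W : Matrix (Fin n) (Fin p) ℝ)
    (Lstar Sstar Lhat Shat : Matrix (Fin p) (Fin p) ℝ)
    (Ustar Vstar Uhat Vhat : Matrix (Fin p) (Fin rbar) ℝ)
    (Sigstar Sighat : Matrix (Fin rbar) (Fin rbar) ℝ)
    (hY : Y = X * (Lstar + Sstar) + W)
    (hUo : Ustarᵀ * Ustar = 1) (hVo : Vstarᵀ * Vstar = 1)
    (hUi : Incoherent μbar Ustar) (hVi : Incoherent μbar Vstar)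
    (hSigd : Sigstar.IsDiag) (hSignn : ∀ i, 0 ≤ Sigstar i i)
    (hLstar : Lstar = Ustar * Sigstar * Vstarᵀ)
    (hSstar : l0Norm Sstar ≤ sbar)
    (hUho : Uhatᵀ * Uhat = 1) (hVho : Vhatᵀ * Vhat = 1)
    (hUhi : Incoherent μbar Uhat) (hVhi : Incoherent μbar Vhat)
    (hSighd : Sighat.IsDiag) (hSighnn : ∀ i, 0 ≤ Sighat i i)
    (hLhat : Lhat = Uhat * Sighat * Vhatᵀ)
    (hShat : l0Norm Shat ≤ sbar)
    (hopt : frobNorm (Y - X * (Lhat + Shat)) ≤ frobNorm (Y - X * (Lstar + Sstar))) :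
    frobNorm (Lhat - Lstar) ^ 2 + frobNorm (Shat - Sstar) ^ 2 ≤
      (128 / σmin ^ 4) *
        ((rbar : ℝ) * σmax ^ 2 * specNorm W ^ 2 +
          (sbar : ℝ) * B ^ 2 * (⨆ j, Real.sqrt (∑ i, (W i j) ^ 2)) ^ 2) := by
  have hpR : (0 : ℝ) < p := by exact_mod_cast hp
  have hrR : (0 : ℝ) < rbar := by exact_mod_cast hrbar
  set w : ℝ := ⨆ j, Real.sqrt (∑ i, (W i j) ^ 2)
  set D := Lhat - Lstar with hD
  set E := Shat - Sstar with hE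
  have hl0 : (l0Norm E : ℝ) ≤ 2 * sbar := by
    exact_mod_cast (l0Norm_sub_le Shat Sstar).trans (by omega)
  have hbasic : frobNorm (X * (D + E)) ^ 2 ≤ 2 * frobInner W (X * (D + E)) := by
    have e1 : Y - X * (Lhat + Shat) = W - X * (D + E) := by
      rw [hY, hD, hE]
      simp only [Matrix.mul_add, Matrix.mul_sub]
      abel
    have e2 : Y - X * (Lstar + Sstar) = W := by rw [hY]; abel
    rw [e1, e2] at hopt
    have := pow_le_pow_left₀ (frobNorm_nonneg _) hopt 2
    rw [frobNorm_sub_sq] at this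
    linarith
  have hlower : σmin ^ 2 * frobNorm (D + E) ^ 2 ≤ frobNorm (X * (D + E)) ^ 2 := by
    rw [← mul_pow]
    exact pow_le_pow_left₀ (mul_nonneg hσmin.le (frobNorm_nonneg _)) (hXlow _) 2
  have hDE : frobInner D E ^ 2 ≤ (frobNorm D * frobNorm E / 2) ^ 2 := by
    have hmax : maxNorm D ^ 2 ≤ c * μbar * (rbar : ℝ) ^ 4 / p * frobNorm D ^ 2 := by
      rw [hD, hLhat, hLstar]
      exact hsep _ _ _ _ _ _ hUho hVho hUo hVo hUhi hVhi hUi hVi hSighd hSighnn hSigd hSignn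
    have hκ : 2 * (sbar : ℝ) * (c * μbar * (rbar : ℝ) ^ 4 / p) ≤ 1 / 4 := by
      rw [le_div_iff₀ (by positivity)] at hsparse
      rw [← mul_div_assoc, div_le_iff₀ hpR]
      linarith
    calc frobInner D E ^ 2 ≤ l0Norm E * maxNorm D ^ 2 * frobNorm E ^ 2 :=
          frobInner_sq_le_of_entry_le D E _ (abs_entry_le_maxNorm D)
      _ ≤ 2 * sbar * (c * μbar * (rbar : ℝ) ^ 4 / p * frobNorm D ^ 2) * frobNorm E ^ 2 := by
          gcongr
      _ = 2 * sbar * (c * μbar * (rbar : ℝ) ^ 4 / p) * (frobNorm D ^ 2 * frobNorm E ^ 2) := by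
          ring
      _ ≤ 1 / 4 * (frobNorm D ^ 2 * frobNorm E ^ 2) := by gcongr
      _ = _ := by ring
  have hincoh : (frobNorm D ^ 2 + frobNorm E ^ 2) / 2 ≤ frobNorm (D + E) ^ 2 := by
    have h := (abs_le_of_sq_le_sq' hDE (by
      have := mul_nonneg (frobNorm_nonneg D) (frobNorm_nonneg E)
      linarith)).1
    rw [frobNorm_add_sq]
    nlinarith [sq_nonneg (frobNorm D - frobNorm E)]
  have hspec : specNorm (Xᵀ * W) ≤ σmax * specNorm W := by
    refine (specNorm_mul_le _ _).trans ?_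
    rw [specNorm_transpose]
    exact mul_le_mul_of_nonneg_right hXspec (specNorm_nonneg _)
  have hlow_rank : frobInner (Xᵀ * W) D ≤ 2 * √rbar * (σmax * specNorm W) * frobNorm D := by
    have h := frobInner_sub_le_of_factored (Xᵀ * W) (Uhat * Sighat) (Sigstar * Vstarᵀ) hUo hVho
    rw [← Matrix.mul_assoc Ustar, ← hLhat, ← hLstar, ← hD] at h
    refine h.trans (mul_le_mul_of_nonneg_right ?_ (frobNorm_nonneg _))
    exact mul_le_mul_of_nonneg_left hspec (by positivity)
  have hlow_rank_sq : (2 * √rbar * (σmax * specNorm W) * frobNorm D) ^ 2 ≤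
      4 * (rbar * σmax ^ 2 * specNorm W ^ 2) * frobNorm D ^ 2 := by
    have := Real.sq_sqrt hrR.le
    apply le_of_eq
    calc _ = 4 * (√rbar ^ 2 * σmax ^ 2 * specNorm W ^ 2) * frobNorm D ^ 2 := by ring
      _ = _ := by rw [this]
  have hsparse_sq : frobInner (Xᵀ * W) E ^ 2 ≤
      2 * (sbar * B ^ 2 * w ^ 2) * frobNorm E ^ 2 := by
    have hent : ∀ i j, |(Xᵀ * W) i j| ≤ B * w := fun i j =>
      (abs_transpose_mul_entry_le X W i j).trans
        (mul_le_mul (hXcol i)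
          (le_ciSup (f := fun j => √(∑ i, (W i j) ^ 2)) (Set.finite_range _).bddAbove j)
          (Real.sqrt_nonneg _) ((Real.sqrt_nonneg _).trans (hXcol i)))
    calc _ ≤ l0Norm E * (B * w) ^ 2 * frobNorm E ^ 2 := frobInner_sq_le_of_entry_le _ E _ hent
      _ ≤ 2 * sbar * (B * w) ^ 2 * frobNorm E ^ 2 := by gcongr
      _ = _ := by ring
  have hcomb := add_sq_le_of_sq_le (by positivity) (by positivity) hlow_rank_sq hsparse_sq
  have hmain : σmin ^ 2 * (frobNorm D ^ 2 + frobNorm E ^ 2) ≤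
      4 * (2 * √rbar * (σmax * specNorm W) * frobNorm D + frobInner (Xᵀ * W) E) := by
    rw [frobInner_mul_left, frobInner_add_right] at hbasic
    linarith [mul_le_mul_of_nonneg_left hincoh (sq_nonneg σmin)]
  set T := frobNorm D ^ 2 + frobNorm E ^ 2
  set P := (rbar : ℝ) * σmax ^ 2 * specNorm W ^ 2
  set Q := (sbar : ℝ) * B ^ 2 * w ^ 2
  have hP0 : 0 ≤ P := by positivity
  have hQ0 : 0 ≤ Q := by positivity
  have hT0 : 0 ≤ T := by positivity
  have hsq := pow_le_pow_left₀ (by positivity) hmain 2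
  have hTT : σmin ^ 4 * T * T ≤ 128 * (P + Q) * T := by
    calc σmin ^ 4 * T * T = (σmin ^ 2 * T) ^ 2 := by ring
      _ ≤ _ := hsq
      _ = 16 * (2 * √rbar * (σmax * specNorm W) * frobNorm D + frobInner (Xᵀ * W) E) ^ 2 := by
          ring
      _ ≤ 16 * ((4 * P + 2 * Q) * T) := by gcongr
      _ ≤ 128 * (P + Q) * T := by linarith [mul_nonneg hP0 hT0, mul_nonneg hQ0 hT0]
  rw [div_mul_eq_mul_div, le_div_iff₀ (by positivity), mul_comm]
  rcases hT0.eq_or_lt with h | h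
  · rw [← h, mul_zero]
    positivity
  · exact le_of_mul_le_mul_right hTT h
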